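/- Let Ψ : ℝ³ → ℝ be four times continuously differentiable and let q ∈ ℝ³ be a point at which the Hessian is diagonal: HΨ(q) = diag(λ₁, λ₂, λ₃) with λ₁ ≠ λ₂ and λ₁ ≠ λ₃. Let (μ, v) be an eigenpair field of HΨ near q with v(q) = e₁, and suppose μ and v are twice continuously differentiable near q. Then the second derivative of the eigenvalue field along the first coordinate direction is ∂₁²μ(q) = ∂₁⁴Ψ(q) + 2·(∂₁∂₁∂₂Ψ(q))²/(λ₁ − λ₂) + 2·(∂₁∂₁∂₃Ψ(q))²/(λ₁ − λ₃). (Eigenframe identity: ∂ₓ²λ₁ = T₁₁₁₁ + 2T₁₁₂²/(T₁₁ − T₂₂) + 2T₁₁₃²/(T₁₁ − T₃₃).) -/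

import Mathlib

/-- The partial derivative `∂ᵢ f` of a scalar field on Euclidean ℝ³. -/
noncomputable def pd (i : Fin 3) (f : EuclideanSpace ℝ (Fin 3) → ℝ)
    (x : EuclideanSpace ℝ (Fin 3)) : ℝ :=
  fderiv ℝ f x (EuclideanSpace.single i 1)

open Filter Topology

lemma pd_congr {f g : EuclideanSpace ℝ (Fin 3) → ℝ} {q : EuclideanSpace ℝ (Fin 3)} (i : Fin 3)
    (h : f =ᶠ[𝓝 q] g) : pd i f =ᶠ[𝓝 q] pd i g := by
  filter_upwards [h.fderiv (𝕜 := ℝ)] with x hx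
  simp only [pd, hx]

lemma pd_mul {f g : EuclideanSpace ℝ (Fin 3) → ℝ} {x : EuclideanSpace ℝ (Fin 3)} (i : Fin 3)
    (hf : DifferentiableAt ℝ f x) (hg : DifferentiableAt ℝ g x) :
    pd i (fun y => f y * g y) x = pd i f x * g x + f x * pd i g x := by
  simp only [pd]
  rw [fderiv_fun_mul hf hg]
  simp
  ring

lemma pd_add {f g : EuclideanSpace ℝ (Fin 3) → ℝ} {x : EuclideanSpace ℝ (Fin 3)} (i : Fin 3)
    (hf : DifferentiableAt ℝ f x) (hg : DifferentiableAt ℝ g x) :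
    pd i (fun y => f y + g y) x = pd i f x + pd i g x := by
  simp only [pd]
  rw [fderiv_fun_add hf hg]
  simp

lemma ev_diff {f : EuclideanSpace ℝ (Fin 3) → ℝ} {q : EuclideanSpace ℝ (Fin 3)}
    (hf : ContDiffAt ℝ 2 f q) : ∀ᶠ x in 𝓝 q, DifferentiableAt ℝ f x := by
  filter_upwards [hf.eventually (by simp)] with x hx
  exact hx.differentiableAt (by norm_num)

lemma pd_contDiffAt {f : EuclideanSpace ℝ (Fin 3) → ℝ} {q : EuclideanSpace ℝ (Fin 3)} (i : Fin 3)
    {n m : WithTop ℕ∞} (hf : ContDiffAt ℝ n f q) (h : m + 1 ≤ n) : ContDiffAt ℝ m (pd i f) q :=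
  (hf.fderiv_right h).clm_apply contDiffAt_const

lemma pd_diff {f : EuclideanSpace ℝ (Fin 3) → ℝ} {q : EuclideanSpace ℝ (Fin 3)} (i : Fin 3)
    (hf : ContDiffAt ℝ 2 f q) : DifferentiableAt ℝ (pd i f) q :=
  (pd_contDiffAt (m := 1) i hf (by norm_num)).differentiableAt (by norm_num)

lemma pd_pd_add {f g : EuclideanSpace ℝ (Fin 3) → ℝ} {q : EuclideanSpace ℝ (Fin 3)} (i : Fin 3)
    (hf : ContDiffAt ℝ 2 f q) (hg : ContDiffAt ℝ 2 g q) :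
    pd i (pd i (fun y => f y + g y)) q = pd i (pd i f) q + pd i (pd i g) q := by
  have h : pd i (fun y => f y + g y) =ᶠ[𝓝 q] fun y => pd i f y + pd i g y := by
    filter_upwards [ev_diff hf, ev_diff hg] with x h1 h2 using pd_add i h1 h2
  rw [(pd_congr i h).eq_of_nhds, pd_add i (pd_diff i hf) (pd_diff i hg)]

lemma pd_pd_mul {f g : EuclideanSpace ℝ (Fin 3) → ℝ} {q : EuclideanSpace ℝ (Fin 3)} (i : Fin 3)
    (hf : ContDiffAt ℝ 2 f q) (hg : ContDiffAt ℝ 2 g q) :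
    pd i (pd i (fun y => f y * g y)) q
      = pd i (pd i f) q * g q + 2 * (pd i f q * pd i g q) + f q * pd i (pd i g) q := by
  have h : pd i (fun y => f y * g y) =ᶠ[𝓝 q] fun y => pd i f y * g y + f y * pd i g y := by
    filter_upwards [ev_diff hf, ev_diff hg] with x h1 h2 using pd_mul i h1 h2
  have df := (ev_diff hf).self_of_nhds
  have dg := (ev_diff hg).self_of_nhds
  rw [(pd_congr i h).eq_of_nhds, pd_add i ((pd_diff i hf).fun_mul dg) (df.fun_mul (pd_diff i hg)),
    pd_mul i (pd_diff i hf) dg, pd_mul i df (pd_diff i hg)]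
  ring

lemma pd_comm {f : EuclideanSpace ℝ (Fin 3) → ℝ} {x : EuclideanSpace ℝ (Fin 3)} (i j : Fin 3)
    (hf : ContDiffAt ℝ 2 f x) : pd i (pd j f) x = pd j (pd i f) x := by
  have hs : IsSymmSndFDerivAt ℝ f x := hf.isSymmSndFDerivAt (by simp)
  have hd : DifferentiableAt ℝ (fderiv ℝ f) x :=
    (hf.fderiv_right (m := 1) (by norm_num)).differentiableAt (by norm_num)
  have key : ∀ a b : Fin 3, pd a (pd b f) x
      = fderiv ℝ (fderiv ℝ f) x (EuclideanSpace.single a 1) (EuclideanSpace.single b 1) := by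
    intro a b
    change fderiv ℝ (fun y => fderiv ℝ f y (EuclideanSpace.single b 1)) x _ = _
    rw [fderiv_clm_apply hd (differentiableAt_const _)]
    simp
  rw [key, key]
  exact hs _ _

/-- Eigenframe identity for the second derivative of the first eigenvalue field:
`∂ₓ²λ₁ = T₁₁₁₁ + 2T₁₁₂²/(T₁₁ − T₂₂) + 2T₁₁₃²/(T₁₁ − T₃₃)`. -/
theorem eigenframe_second_deriv_eigenvalue
    (Ψ : EuclideanSpace ℝ (Fin 3) → ℝ) (hΨ : ContDiff ℝ 4 Ψ)
    (q : EuclideanSpace ℝ (Fin 3)) (l1 l2 l3 : ℝ)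
    (hdiag : (Matrix.of fun i j => pd i (pd j Ψ) q) = Matrix.diagonal ![l1, l2, l3])
    (h12 : l1 ≠ l2) (h13 : l1 ≠ l3)
    (μ : EuclideanSpace ℝ (Fin 3) → ℝ)
    (v : EuclideanSpace ℝ (Fin 3) → EuclideanSpace ℝ (Fin 3))
    (U : Set (EuclideanSpace ℝ (Fin 3))) (hU : U ∈ nhds q)
    (heig : ∀ x ∈ U, ∀ i : Fin 3, (∑ j : Fin 3, pd i (pd j Ψ) x * v x j) = μ x * v x i)
    (hnorm : ∀ x ∈ U, ‖v x‖ = 1)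
    (hvq : v q = EuclideanSpace.single 0 1)
    (hμ : ContDiffAt ℝ 2 μ q) (hv : ContDiffAt ℝ 2 v q) :
    pd 0 (pd 0 μ) q =
      pd 0 (pd 0 (pd 0 (pd 0 Ψ))) q
        + 2 * (pd 0 (pd 0 (pd 1 Ψ)) q) ^ 2 / (l1 - l2)
        + 2 * (pd 0 (pd 0 (pd 2 Ψ)) q) ^ 2 / (l1 - l3) := by
  have hh : ∀ i j, ContDiffAt ℝ 2 (pd i (pd j Ψ)) q := fun i j =>
    pd_contDiffAt (n := 3) i (pd_contDiffAt (n := 4) j hΨ.contDiffAt (by norm_num)) (by norm_num)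
  have hw : ∀ j, ContDiffAt ℝ 2 (fun x => v x j) q := fun j => by
    exact (contDiffAt_euclidean.1 hv) j
  have dh : ∀ i j, DifferentiableAt ℝ (pd i (pd j Ψ)) q := fun i j =>
    (hh i j).differentiableAt (by norm_num)
  have dw : ∀ j, DifferentiableAt ℝ (fun x => v x j) q := fun j =>
    (hw j).differentiableAt (by norm_num)
  have dm : DifferentiableAt ℝ μ q := hμ.differentiableAt (by norm_num)
  have E : ∀ i : Fin 3, (fun x => (pd i (pd 0 Ψ) x * v x 0 + pd i (pd 1 Ψ) x * v x 1)
      + pd i (pd 2 Ψ) x * v x 2) =ᶠ[𝓝 q] fun x => μ x * v x i := by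
    intro i
    filter_upwards [hU] with x hx
    have := heig x hx i
    rwa [Fin.sum_univ_three] at this
  have H : ∀ i j, pd i (pd j Ψ) q = Matrix.diagonal ![l1, l2, l3] i j := fun i j =>
    congrFun (congrFun hdiag i) j
  have v0 : v q 0 = 1 := by simp [hvq]
  have v1 : v q 1 = 0 := by simp [hvq]
  have v2 : v q 2 = 0 := by simp [hvq]
  have hm : μ q = l1 := by
    have := (E 0).eq_of_nhds
    simp [H, v0, v1, v2] at this
    exact this.symm
  have D1 : ∀ i : Fin 3, _ := fun i => (pd_congr 0 (E i)).eq_of_nhds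
  have D2 := (pd_congr 0 (pd_congr 0 (E 0))).eq_of_nhds
  have D1' : ∀ i : Fin 3, pd 0 (pd i (pd 0 Ψ)) q
      + (pd i (pd 0 Ψ) q * pd 0 (fun x => v x 0) q + pd i (pd 1 Ψ) q * pd 0 (fun x => v x 1) q
      + pd i (pd 2 Ψ) q * pd 0 (fun x => v x 2) q)
      = pd 0 μ q * v q i + l1 * pd 0 (fun x => v x i) q := by
    intro i
    have := D1 i
    rw [pd_add 0 (((dh i 0).fun_mul (dw 0)).fun_add ((dh i 1).fun_mul (dw 1))) ((dh i 2).fun_mul (dw 2)),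
      pd_add 0 ((dh i 0).fun_mul (dw 0)) ((dh i 1).fun_mul (dw 1)), pd_mul 0 (dh i 0) (dw 0),
      pd_mul 0 (dh i 1) (dw 1), pd_mul 0 (dh i 2) (dw 2), pd_mul 0 dm (dw i), v0, v1, v2, hm] at this
    linarith
  rw [pd_pd_add 0 (((hh 0 0).mul (hw 0)).add ((hh 0 1).mul (hw 1))) ((hh 0 2).mul (hw 2)),
      pd_pd_add 0 ((hh 0 0).mul (hw 0)) ((hh 0 1).mul (hw 1)), pd_pd_mul 0 (hh 0 0) (hw 0),
      pd_pd_mul 0 (hh 0 1) (hw 1), pd_pd_mul 0 (hh 0 2) (hw 2), pd_pd_mul 0 hμ (hw 0),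
      v0, v1, v2, hm] at D2
  have S : ∀ j, pd 0 (pd j (pd 0 Ψ)) q = pd 0 (pd 0 (pd j Ψ)) q := fun j => by
    refine (pd_congr 0 ?_).eq_of_nhds
    exact Eventually.of_forall fun x =>
      pd_comm j 0 ((hΨ.of_le (by norm_num)).contDiffAt)
  have A0 := D1' 0
  have A1 := D1' 1
  have A2 := D1' 2
  rw [S] at A1 A2
  simp [H, v0, v1, v2] at A0 A1 A2 D2
  have n12 : l1 - l2 ≠ 0 := sub_ne_zero.2 h12
  have n13 : l1 - l3 ≠ 0 := sub_ne_zero.2 h13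
  have B1 : pd 0 (fun x => v x 1) q = pd 0 (pd 0 (pd 1 Ψ)) q / (l1 - l2) := by
    rw [eq_div_iff n12]; linarith
  have B2 : pd 0 (fun x => v x 2) q = pd 0 (pd 0 (pd 2 Ψ)) q / (l1 - l3) := by
    rw [eq_div_iff n13]; linarith
  rw [B1, B2, ← A0] at D2
  linear_combination -D2
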